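/- Let R be a (possibly noncommutative) ring, L0, L1 ∈ R, and Ȳ an element of an R-module M. Define the sequence Y : ℕ → M by Y 0 = 0, Y 1 = Ȳ, and Y (p+2) = L0 • Y p + L1 • Y (p+1). Then for all p ≥ 1, Y p = (∑ over all words w in the letters L0, L1 of length p-1 containing at most ⌊(p-1)/2⌋ letters L0, where each occurrence of L0 counts for length 2, i.e. over all words with t factors L0 and p-1-2t factors L1 for 0 ≤ t ≤ ⌊(p-1)/2⌋, of the product of the letters of w) • Ȳ. -/

import Mathlib

/-- The sum over all words consisting of `u` copies of `L0` and `v` copies of `L1`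
of the ordered product of the letters.  A word is encoded as a function
`Fin (u+v) → Bool`, with `false` standing for `L0` and `true` for `L1`. -/
def wordSum {R : Type*} [Ring R] (L0 L1 : R) (u v : ℕ) : R :=
  ∑ w ∈ Finset.univ.filter (fun f : Fin (u + v) → Bool =>
      (Finset.univ.filter (fun i => f i = false)).card = u),
    (List.ofFn fun i => if w i then L1 else L0).prod

/-- The sum of the products of all words of length `n` in `L0`, `L1` with exactly `u` letters
`L0`. -/
def lengthWordSum {R : Type*} [Ring R] (L0 L1 : R) (n u : ℕ) : R :=
  ∑ w ∈ Finset.univ.filter (fun f : Fin n → Bool =>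
      (Finset.univ.filter (fun i => f i = false)).card = u),
    (List.ofFn fun i => if w i then L1 else L0).prod

section lengthWordSum

variable {R : Type*} [Ring R] (L0 L1 : R)

theorem lengthWordSum_eq_zero {n u : ℕ} (h : n < u) : lengthWordSum L0 L1 n u = 0 := by
  refine Finset.sum_eq_zero fun w hw => absurd (Finset.mem_filter.mp hw).2 ?_
  have := Finset.card_le_univ (Finset.univ.filter fun i => w i = false)
  rw [Fintype.card_fin] at this
  omega

theorem lengthWordSum_zero_zero : lengthWordSum L0 L1 0 0 = 1 := by
  simp [lengthWordSum]

theorem card_filter_cons_eq_false {n : ℕ} (b : Bool) (w : Fin n → Bool) :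
    (Finset.univ.filter fun i => (Fin.cons b w : Fin (n + 1) → Bool) i = false).card =
      (Finset.univ.filter fun i => w i = false).card + if b then 0 else 1 := by
  rw [Fin.card_filter_univ_succ]
  cases b <;> simp

theorem sum_fin_succ_bool (n : ℕ) (F : (Fin (n + 1) → Bool) → R) :
    ∑ w, F w = ∑ w, F (Fin.cons true w) + ∑ w, F (Fin.cons false w) := by
  rw [← (Fin.consEquiv fun _ => Bool).sum_comp, Fintype.sum_prod_type, Fintype.sum_bool]
  rfl

theorem lengthWordSum_succ_aux (n u : ℕ) :
    lengthWordSum L0 L1 (n + 1) u =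
      (∑ w : Fin n → Bool, if (Finset.univ.filter (fun i => w i = false)).card = u then
          L1 * (List.ofFn fun i => if w i then L1 else L0).prod else 0) +
      ∑ w : Fin n → Bool, if (Finset.univ.filter (fun i => w i = false)).card + 1 = u then
          L0 * (List.ofFn fun i => if w i then L1 else L0).prod else 0 := by
  rw [lengthWordSum, Finset.sum_filter, sum_fin_succ_bool]
  simp [card_filter_cons_eq_false, List.ofFn_succ]

theorem lengthWordSum_succ_zero (n : ℕ) :
    lengthWordSum L0 L1 (n + 1) 0 = L1 * lengthWordSum L0 L1 n 0 := by
  rw [lengthWordSum_succ_aux, lengthWordSum, Finset.sum_filter, Finset.mul_sum]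
  simp only [Nat.add_one_ne_zero, if_false, Finset.sum_const_zero, add_zero, mul_ite, mul_zero]

theorem lengthWordSum_succ_succ (n u : ℕ) :
    lengthWordSum L0 L1 (n + 1) (u + 1) =
      L1 * lengthWordSum L0 L1 n (u + 1) + L0 * lengthWordSum L0 L1 n u := by
  rw [lengthWordSum_succ_aux, lengthWordSum, lengthWordSum, Finset.sum_filter, Finset.sum_filter,
    Finset.mul_sum, Finset.mul_sum]
  simp only [Nat.add_right_cancel_iff, mul_ite, mul_zero]

theorem sum_antidiagonal_lengthWordSum_add_two (n : ℕ) :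
    ∑ x ∈ Finset.HasAntidiagonal.antidiagonal (n + 2), lengthWordSum L0 L1 x.1 x.2 =
      L0 * ∑ x ∈ Finset.HasAntidiagonal.antidiagonal n, lengthWordSum L0 L1 x.1 x.2 +
      L1 * ∑ x ∈ Finset.HasAntidiagonal.antidiagonal (n + 1), lengthWordSum L0 L1 x.1 x.2 := by
  rw [Finset.Nat.sum_antidiagonal_succ, lengthWordSum_eq_zero L0 L1 (by omega), zero_add,
    Finset.Nat.sum_antidiagonal_succ', Finset.Nat.sum_antidiagonal_succ']
  simp only [lengthWordSum_succ_zero, lengthWordSum_succ_succ, Finset.sum_add_distrib,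
    Finset.mul_sum, mul_add]
  abel

theorem sum_wordSum_eq_sum_antidiagonal (n : ℕ) :
    ∑ t ∈ Finset.range (n / 2 + 1), wordSum L0 L1 t (n - 2 * t) =
      ∑ x ∈ Finset.HasAntidiagonal.antidiagonal n, lengthWordSum L0 L1 x.1 x.2 := by
  rw [← Finset.Nat.sum_antidiagonal_swap, Finset.Nat.sum_antidiagonal_eq_sum_range_succ_mk]
  have h : ∀ t ∈ Finset.range (n / 2 + 1),
      wordSum L0 L1 t (n - 2 * t) = lengthWordSum L0 L1 (n - t) t := by
    intro t ht
    rw [Finset.mem_range] at ht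
    rw [show n - t = t + (n - 2 * t) by omega]
    rfl
  rw [Finset.sum_congr rfl h]
  refine Finset.sum_subset (Finset.range_mono (by omega)) fun t _ ht => ?_
  rw [Finset.mem_range] at ht
  exact lengthWordSum_eq_zero L0 L1 (by omega)

end lengthWordSum

/-- Solution of the noncommutative Cauchy problem in an `R`-module. -/
theorem cauchy_solution {R M : Type*} [Ring R] [AddCommGroup M] [Module R M]
    (L0 L1 : R) (Ybar : M) (Y : ℕ → M)
    (h0 : Y 0 = 0) (h1 : Y 1 = Ybar)
    (hrec : ∀ p : ℕ, Y (p + 2) = L0 • Y p + L1 • Y (p + 1)) :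
    ∀ p : ℕ, 1 ≤ p →
      Y p = (∑ t ∈ Finset.range ((p - 1) / 2 + 1),
              wordSum L0 L1 t (p - 1 - 2 * t)) • Ybar := by
  have key : ∀ n, Y (n + 1) =
      (∑ x ∈ Finset.HasAntidiagonal.antidiagonal n, lengthWordSum L0 L1 x.1 x.2) • Ybar := by
    intro n
    induction n using Nat.twoStepInduction with
    | zero => simp [lengthWordSum_zero_zero, h1]
    | one =>
      simp [hrec 0, h0, h1, Finset.Nat.sum_antidiagonal_succ, lengthWordSum_succ_zero,
        lengthWordSum_zero_zero, lengthWordSum_eq_zero]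
    | more n ih ih' =>
      rw [hrec (n + 1), ih, ih', sum_antidiagonal_lengthWordSum_add_two, add_smul, mul_smul,
        mul_smul]
  intro p hp
  obtain ⟨n, rfl⟩ := Nat.exists_eq_add_of_le' hp
  rw [Nat.add_sub_cancel, sum_wordSum_eq_sum_antidiagonal, key]
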